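/- arXiv:2502.09003 — 3 statements merged into one kernel-verified Lean document; each statement's English description precedes it below -/
import Mathlib

section
/- Theorem 1 (convergence of the QAT stage of RoSTE, in the form established by its proof). Set the step size η = λ/(6ρ) and μ = λ²/(12ρ) = ηλ/2. Fix an initial weight w⁰ : Fin d → ℝ. For a sample path ξ : ℕ → Fin N define iterates recursively by w⁰(ξ) = w⁰ and w^{s+1}(ξ) = (w^s(ξ))⁺(ξ s) via the rotated STE update. Then for every t ∈ ℕ, averaging uniformly over all N^{t+1} sample paths ξ ∈ (Fin N)^{t+1} (the iterate w^s(ξ) only depends on ξ 0, …, ξ (s−1)): N^{−(t+1)} · ∑_{ξ} ‖Q_w(R.mulVec (w^{t+1}(ξ))) − w⋆‖_G² ≤ (1 − μ)^{t+1} · ‖Q_w(R.mulVec w⁰) − w⋆‖_G² + (3 + 2/μ) · ∑_{k=0}^{t} (1 − μ)^{t−k} · N^{−(t+1)} · ∑_{ξ} ( ‖e(R.mulVec (w^{k+1}(ξ)))‖_G² + ‖e(R.mulVec (w^{k}(ξ)))‖_G² ). -/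
/-!
The argument is a one-step contraction in the `G`-seminorm. Write `z = Q_w(R v) - w⋆`. As `R Rᵀ = 1`,
an update at sample `j` moves `z` to `z⁺ = a + e⁺ - e`, where `a = z - η (q_j ⬝ z) q_j` and `e, e⁺`
are the quantization errors before and after. Averaging over `j`, with `G² ≥ λ G` and
`‖q_j‖_G² ≤ ρ`,
`E‖a‖_G² ≤ (1 - 2ηλ + η²ρ) ‖z‖_G² = (1 - 11μ/3) ‖z‖_G²` (`sum_wnormSq_sgd_le`).
Young's inequality with parameter `μ` turns this into
`E‖z⁺‖_G² ≤ (1 - μ) ‖z‖_G² + (3 + 2/μ) E(‖e⁺‖_G² + ‖e‖_G²)` (`one_step`).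

Since the iterate at time `s` does not depend on `ξ s`, a sum over sample paths may be resampled in
that coordinate (`sum_resample`), which gives the same recursion for the path averages; unrolling it
requires `0 ≤ 1 - μ`. That holds unless `G = 0`: the left-hand side of
the bound on `E‖a‖_G²` is nonnegative, so `μ ≤ 3/11` as soon as some `‖z‖_G²` is positive, and
otherwise both sides of the theorem vanish.
-/

open Matrix Finset

noncomputable section

/-- The (empirical) Gram matrix of the quantized-rotated features. -/
def gram (d N : ℕ) (q : Fin N → Fin d → ℝ) : Matrix (Fin d) (Fin d) ℝ :=
  (N : ℝ)⁻¹ • ∑ i, Matrix.vecMulVec (q i) (q i)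

/-- `K`-weighted squared (semi-)norm `‖v‖_K² = v ⬝ᵥ K v`. -/
def wnormSq {d : ℕ} (K : Matrix (Fin d) (Fin d) ℝ) (v : Fin d → ℝ) : ℝ :=
  v ⬝ᵥ K.mulVec v

/-- Quantization error `e(v) = Q_w(v) - v`. -/
def qerr {d : ℕ} (Qw : (Fin d → ℝ) → Fin d → ℝ) (v : Fin d → ℝ) : Fin d → ℝ :=
  Qw v - v

/-- The rotated STE update at sample `j`. -/
def steUpdate {d N : ℕ} (q : Fin N → Fin d → ℝ) (y : Fin N → ℝ)
    (Qw : (Fin d → ℝ) → Fin d → ℝ) (R : Matrix (Fin d) (Fin d) ℝ) (η : ℝ)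
    (v : Fin d → ℝ) (j : Fin N) : Fin d → ℝ :=
  v - (η * ((q j ⬝ᵥ Qw (R.mulVec v)) - y j)) • Rᵀ.mulVec (q j)

/-- STE iterates along a sample path `ξ`: `w⁰(ξ) = w0`, `w^{s+1}(ξ) = (w^s(ξ))⁺(ξ s)`. -/
def stePath {d N : ℕ} (q : Fin N → Fin d → ℝ) (y : Fin N → ℝ)
    (Qw : (Fin d → ℝ) → Fin d → ℝ) (R : Matrix (Fin d) (Fin d) ℝ) (η : ℝ)
    (w0 : Fin d → ℝ) (ξ : ℕ → Fin N) : ℕ → Fin d → ℝ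
  | 0 => w0
  | s + 1 => steUpdate q y Qw R η (stePath q y Qw R η w0 ξ s) (ξ s)

/-- Extend a finite sample path `ξ ∈ (Fin N)^{t+1}` to an infinite one (the iterate
`w^s(ξ)` for `s ≤ t+1` only depends on `ξ 0, …, ξ (s-1)`, so the extension is immaterial). -/
def extendPath {N t : ℕ} (ξ : Fin (t + 1) → Fin N) : ℕ → Fin N :=
  fun s => if h : s < t + 1 then ξ ⟨s, h⟩ else ξ 0

lemma dotProduct_gram_mulVec {d N : ℕ} (q : Fin N → Fin d → ℝ) (u v : Fin d → ℝ) :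
    u ⬝ᵥ (gram d N q).mulVec v = (N : ℝ)⁻¹ * ∑ i, (q i ⬝ᵥ u) * (q i ⬝ᵥ v) := by
  simp only [_root_.gram, Matrix.smul_mulVec, dotProduct_smul, smul_eq_mul, Matrix.sum_mulVec,
    dotProduct_sum, Matrix.vecMulVec_mulVec]
  congr 1
  refine Finset.sum_congr rfl fun i _ => ?_
  simp [dotProduct_comm u (q i)]

lemma wnormSq_gram {d N : ℕ} (q : Fin N → Fin d → ℝ) (v : Fin d → ℝ) :
    wnormSq (gram d N q) v = (N : ℝ)⁻¹ * ∑ i, (q i ⬝ᵥ v) ^ 2 := by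
  rw [wnormSq, dotProduct_gram_mulVec]
  simp only [sq]

lemma wnormSq_gram_nonneg {d N : ℕ} (q : Fin N → Fin d → ℝ) (v : Fin d → ℝ) :
    0 ≤ wnormSq (gram d N q) v := by
  rw [wnormSq_gram]
  positivity

/-- The Young-type inequality `‖a + x - y‖² ≤ (1 + μ) ‖a‖² + 2 (1 + 1/μ) (‖x‖² + ‖y‖²)`
for the Gram seminorm. -/
lemma wnormSq_young {d N : ℕ} (q : Fin N → Fin d → ℝ) {μ : ℝ} (hμ : 0 < μ)
    (a x y : Fin d → ℝ) :
    wnormSq (gram d N q) (a + x - y) ≤ (1 + μ) * wnormSq (gram d N q) a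
      + (2 + 2 / μ) * (wnormSq (gram d N q) x + wnormSq (gram d N q) y) := by
  simp only [wnormSq_gram]
  have key : ∀ r s t : ℝ,
      (r + s - t) ^ 2 ≤ (1 + μ) * r ^ 2 + (2 + 2 / μ) * (s ^ 2 + t ^ 2) := by
    intro r s t
    have h1 : (1 + μ) * r ^ 2 + (2 + 2 / μ) * (s ^ 2 + t ^ 2) - (r + s - t) ^ 2
        = (μ * r - (s - t)) ^ 2 / μ + (1 + 1 / μ) * (s + t) ^ 2 := by
      field_simp
      ring
    have h2 : 0 ≤ (μ * r - (s - t)) ^ 2 / μ + (1 + 1 / μ) * (s + t) ^ 2 := by positivity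
    linarith
  have hs : ∑ i, (q i ⬝ᵥ (a + x - y)) ^ 2 ≤ (1 + μ) * ∑ i, (q i ⬝ᵥ a) ^ 2
      + (2 + 2 / μ) * (∑ i, (q i ⬝ᵥ x) ^ 2 + ∑ i, (q i ⬝ᵥ y) ^ 2) := by
    rw [← Finset.sum_add_distrib, Finset.mul_sum, Finset.mul_sum, ← Finset.sum_add_distrib]
    refine Finset.sum_le_sum fun i _ => ?_
    rw [dotProduct_sub, dotProduct_add]
    exact key _ _ _
  have := mul_le_mul_of_nonneg_left hs (show (0 : ℝ) ≤ (N : ℝ)⁻¹ by positivity)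
  linarith

lemma wnormSq_sub_smul {d N : ℕ} (q : Fin N → Fin d → ℝ) (z p : Fin d → ℝ) (c : ℝ) :
    wnormSq (gram d N q) (z - c • p) = wnormSq (gram d N q) z
      - 2 * c * (p ⬝ᵥ (gram d N q).mulVec z) + c ^ 2 * (p ⬝ᵥ (gram d N q).mulVec p) := by
  have hsymm : z ⬝ᵥ (gram d N q).mulVec p = p ⬝ᵥ (gram d N q).mulVec z := by
    simp only [dotProduct_gram_mulVec, mul_comm]
  simp only [wnormSq, Matrix.mulVec_sub, Matrix.mulVec_smul, dotProduct_sub, sub_dotProduct,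
    dotProduct_smul, smul_dotProduct, smul_eq_mul, hsymm]
  ring

/-- Contraction of an exact (unquantized) gradient step, summed over the sample `j`. -/
lemma sum_wnormSq_sgd_le {d N : ℕ} (hN : 1 ≤ N) (q : Fin N → Fin d → ℝ)
    (lam ρ : ℝ) (hlam : 0 < lam) (hρ : 0 < ρ)
    (hG2 : (gram d N q * gram d N q - lam • gram d N q).PosSemidef)
    (hqG : ∀ i, q i ⬝ᵥ (gram d N q).mulVec (q i) ≤ ρ)
    (η μ : ℝ) (hη : η = lam / (6 * ρ)) (hμ : μ = lam ^ 2 / (12 * ρ)) (z : Fin d → ℝ) :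
    ∑ j, wnormSq (gram d N q) (z - (η * (q j ⬝ᵥ z)) • q j)
      ≤ N * ((1 - 11 / 3 * μ) * wnormSq (gram d N q) z) := by
  have hN0 : (N : ℝ) ≠ 0 := by positivity
  have hη0 : 0 < η := by rw [hη]; positivity
  have hηlam : η * lam = 2 * μ := by rw [hη, hμ]; field_simp; norm_num
  have hηρ : η ^ 2 * ρ = μ / 3 := by rw [hη, hμ]; field_simp; norm_num
  have hpsd : lam * wnormSq (gram d N q) z
      ≤ z ⬝ᵥ (gram d N q).mulVec ((gram d N q).mulVec z) := by
    have h := hG2.dotProduct_mulVec_nonneg z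
    simp only [star_trivial, Matrix.sub_mulVec, Matrix.smul_mulVec, dotProduct_sub,
      dotProduct_smul, smul_eq_mul, ← Matrix.mulVec_mulVec] at h
    rw [wnormSq]
    linarith
  have hcross : ∑ j, (q j ⬝ᵥ z) * (q j ⬝ᵥ (gram d N q).mulVec z)
      = N * (z ⬝ᵥ (gram d N q).mulVec ((gram d N q).mulVec z)) := by
    rw [dotProduct_gram_mulVec q z, mul_inv_cancel_left₀ hN0]
  have hsq : ∑ j, (q j ⬝ᵥ z) ^ 2 = N * wnormSq (gram d N q) z := by
    rw [wnormSq_gram, mul_inv_cancel_left₀ hN0]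
  calc ∑ j, wnormSq (gram d N q) (z - (η * (q j ⬝ᵥ z)) • q j)
      ≤ ∑ j, (wnormSq (gram d N q) z
          - 2 * η * ((q j ⬝ᵥ z) * (q j ⬝ᵥ (gram d N q).mulVec z))
          + η ^ 2 * ρ * (q j ⬝ᵥ z) ^ 2) := by
        refine Finset.sum_le_sum fun j _ => ?_
        rw [wnormSq_sub_smul]
        have := mul_le_mul_of_nonneg_left (hqG j) (sq_nonneg (η * (q j ⬝ᵥ z)))
        linarith
    _ = N * (wnormSq (gram d N q) z
          - 2 * η * (z ⬝ᵥ (gram d N q).mulVec ((gram d N q).mulVec z))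
          + μ / 3 * wnormSq (gram d N q) z) := by
        rw [Finset.sum_add_distrib, Finset.sum_sub_distrib, ← Finset.mul_sum, ← Finset.mul_sum,
          hcross, hsq, hηρ, Finset.sum_const, Finset.card_univ, Fintype.card_fin, nsmul_eq_mul]
        ring
    _ ≤ N * ((1 - 11 / 3 * μ) * wnormSq (gram d N q) z) := by
        refine mul_le_mul_of_nonneg_left ?_ (Nat.cast_nonneg N)
        have h1 := mul_le_mul_of_nonneg_left hpsd hη0.le
        rw [← mul_assoc, hηlam] at h1
        linarith

/-- The one-step recursion of the quantized iteration, summed over the sample `j` and written with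
everything on one side. -/
lemma one_step {d N : ℕ} (hN : 1 ≤ N) (q : Fin N → Fin d → ℝ) (y : Fin N → ℝ)
    (wstar : Fin d → ℝ) (hinterp : ∀ i, y i = q i ⬝ᵥ wstar)
    (Qw : (Fin d → ℝ) → Fin d → ℝ)
    (R : Matrix (Fin d) (Fin d) ℝ) (hR1 : R * Rᵀ = 1)
    (lam ρ : ℝ) (hlam : 0 < lam) (hρ : 0 < ρ)
    (hG2 : (gram d N q * gram d N q - lam • gram d N q).PosSemidef)
    (hqG : ∀ i, q i ⬝ᵥ (gram d N q).mulVec (q i) ≤ ρ)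
    (η μ : ℝ) (hη : η = lam / (6 * ρ)) (hμ : μ = lam ^ 2 / (12 * ρ)) (v : Fin d → ℝ) :
    ∑ j, (wnormSq (gram d N q) (Qw (R.mulVec (steUpdate q y Qw R η v j)) - wstar)
      - (1 - μ) * wnormSq (gram d N q) (Qw (R.mulVec v) - wstar)
      - (3 + 2 / μ) * (wnormSq (gram d N q) (qerr Qw (R.mulVec (steUpdate q y Qw R η v j)))
          + wnormSq (gram d N q) (qerr Qw (R.mulVec v)))) ≤ 0 := by
  have hμ0 : 0 < μ := by rw [hμ]; positivity
  set z := Qw (R.mulVec v) - wstar with hz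
  have hdecomp : ∀ j, Qw (R.mulVec (steUpdate q y Qw R η v j)) - wstar
      = (z - (η * (q j ⬝ᵥ z)) • q j) + qerr Qw (R.mulVec (steUpdate q y Qw R η v j))
        - qerr Qw (R.mulVec v) := by
    intro j
    have h : R.mulVec (steUpdate q y Qw R η v j) = R.mulVec v - (η * (q j ⬝ᵥ z)) • q j := by
      rw [steUpdate, Matrix.mulVec_sub, Matrix.mulVec_smul, Matrix.mulVec_mulVec, hR1,
        Matrix.one_mulVec, hinterp, ← dotProduct_sub]
    simp only [qerr]
    nth_rewrite 3 [h]
    rw [hz]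
    abel
  have hsgd := sum_wnormSq_sgd_le hN q lam ρ hlam hρ hG2 hqG η μ hη hμ z
  have hz0 := wnormSq_gram_nonneg q z
  calc _ ≤ ∑ j, ((1 + μ) * wnormSq (gram d N q) (z - (η * (q j ⬝ᵥ z)) • q j)
          - (1 - μ) * wnormSq (gram d N q) z) := by
        refine Finset.sum_le_sum fun j _ => ?_
        have h := wnormSq_young q hμ0 (z - (η * (q j ⬝ᵥ z)) • q j)
          (qerr Qw (R.mulVec (steUpdate q y Qw R η v j))) (qerr Qw (R.mulVec v))
        rw [← hdecomp j] at h
        have h1 := wnormSq_gram_nonneg q (qerr Qw (R.mulVec (steUpdate q y Qw R η v j)))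
        have h2 := wnormSq_gram_nonneg q (qerr Qw (R.mulVec v))
        linarith
    _ = (1 + μ) * ∑ j, wnormSq (gram d N q) (z - (η * (q j ⬝ᵥ z)) • q j)
          - N * ((1 - μ) * wnormSq (gram d N q) z) := by
        rw [Finset.sum_sub_distrib, ← Finset.mul_sum, Finset.sum_const, Finset.card_univ,
          Fintype.card_fin, nsmul_eq_mul]
    _ ≤ (1 + μ) * (N * ((1 - 11 / 3 * μ) * wnormSq (gram d N q) z))
          - N * ((1 - μ) * wnormSq (gram d N q) z) := by
        gcongr
    _ = -((5 / 3 * μ + 11 / 3 * μ ^ 2) * (N * wnormSq (gram d N q) z)) := by ring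
    _ ≤ 0 := by
        rw [neg_nonpos]
        positivity

/-- If `g ξ` does not depend on the coordinate `ξ i`, then evaluating it at `ξ i` amounts, in the
sum over all paths, to evaluating it at an independent uniform sample. -/
lemma sum_resample {ι α : Type*} [Fintype ι] [DecidableEq ι] [Fintype α]
    (i : ι) (g : (ι → α) → α → ℝ)
    (hg : ∀ ξ a, g (Function.update ξ i a) = g ξ) :
    (Fintype.card α : ℝ) * ∑ ξ : ι → α, g ξ (ξ i) = ∑ ξ : ι → α, ∑ a, g ξ a := by
  classical
  -- exchange the `i`-th coordinate with the extra sample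
  have hinv : Function.Involutive
      (fun p : (ι → α) × α => (Function.update p.1 i p.2, p.1 i)) := by
    rintro ⟨ξ, a⟩
    simp
  have h := Equiv.sum_comp hinv.toPerm (fun p : (ι → α) × α => g p.1 (p.1 i))
  simp only [Function.Involutive.coe_toPerm, Function.update_self, hg] at h
  rw [Fintype.sum_prod_type, Fintype.sum_prod_type] at h
  rw [h, Finset.mul_sum]
  simp

lemma stePath_congr {d N : ℕ} (q : Fin N → Fin d → ℝ) (y : Fin N → ℝ)
    (Qw : (Fin d → ℝ) → Fin d → ℝ) (R : Matrix (Fin d) (Fin d) ℝ) (η : ℝ)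
    (w0 : Fin d → ℝ) (ξ ξ' : ℕ → Fin N) (s : ℕ) (h : ∀ r < s, ξ r = ξ' r) :
    stePath q y Qw R η w0 ξ s = stePath q y Qw R η w0 ξ' s := by
  induction s with
  | zero => rfl
  | succ s ih =>
    simp only [stePath]
    rw [ih fun r hr => h r (by omega), h s (by omega)]

/-- Unrolled form of the linear recursion `A (s+1) ≤ c * A s + C * B s`. -/
lemma unroll_recursion (A B : ℕ → ℝ) (c C : ℝ) (hc : 0 ≤ c) (t : ℕ)
    (h : ∀ s ≤ t, A (s + 1) ≤ c * A s + C * B s) :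
    A (t + 1) ≤ c ^ (t + 1) * A 0 + C * ∑ k ∈ Finset.range (t + 1), c ^ (t - k) * B k := by
  induction t with
  | zero => simpa using h 0 le_rfl
  | succ t ih =>
    have h1 := mul_le_mul_of_nonneg_left (ih fun s hs => h s (by omega)) hc
    have h2 := h (t + 1) le_rfl
    have h3 : ∑ k ∈ Finset.range (t + 1), c ^ (t + 1 - k) * B k
        = c * ∑ k ∈ Finset.range (t + 1), c ^ (t - k) * B k := by
      rw [Finset.mul_sum]
      refine Finset.sum_congr rfl fun k hk => ?_
      have hk' := Finset.mem_range.mp hk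
      rw [show t + 1 - k = (t - k) + 1 by omega, pow_succ]
      ring
    rw [Finset.sum_range_succ, h3, Nat.sub_self, pow_zero, pow_succ c (t + 1)]
    linarith

/-- Theorem 1: convergence of the QAT stage of RoSTE, averaging uniformly over all
`N^(t+1)` sample paths, with step size `η = λ/(6ρ)` and `μ = λ²/(12ρ)`. -/
theorem roste_qat_convergence (d N : ℕ) (hd : 1 ≤ d) (hN : 1 ≤ N)
    (q : Fin N → Fin d → ℝ) (y : Fin N → ℝ)
    (wstar : Fin d → ℝ) (hinterp : ∀ i, y i = q i ⬝ᵥ wstar)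
    (Qw : (Fin d → ℝ) → Fin d → ℝ)
    (R : Matrix (Fin d) (Fin d) ℝ) (hR1 : R * Rᵀ = 1) (hR2 : Rᵀ * R = 1)
    (lam ρ : ℝ) (hlam : 0 < lam) (hρ : 0 < ρ)
    (hG2 : (gram d N q * gram d N q - lam • gram d N q).PosSemidef)
    (hqG : ∀ i, q i ⬝ᵥ (gram d N q).mulVec (q i) ≤ ρ)
    (η μ : ℝ) (hη : η = lam / (6 * ρ)) (hμ : μ = lam ^ 2 / (12 * ρ))
    (w0 : Fin d → ℝ) (t : ℕ) :
    ((N : ℝ) ^ (t + 1))⁻¹ *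
        ∑ ξ : Fin (t + 1) → Fin N,
          wnormSq (gram d N q)
            (Qw (R.mulVec (stePath q y Qw R η w0 (extendPath ξ) (t + 1))) - wstar)
      ≤ (1 - μ) ^ (t + 1) * wnormSq (gram d N q) (Qw (R.mulVec w0) - wstar)
        + (3 + 2 / μ) *
            ∑ k ∈ Finset.range (t + 1),
              (1 - μ) ^ (t - k) *
                (((N : ℝ) ^ (t + 1))⁻¹ *
                  ∑ ξ : Fin (t + 1) → Fin N,
                    (wnormSq (gram d N q)
                        (qerr Qw (R.mulVec (stePath q y Qw R η w0 (extendPath ξ) (k + 1))))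
                      + wnormSq (gram d N q)
                          (qerr Qw (R.mulVec (stePath q y Qw R η w0 (extendPath ξ) k))))) := by
  have hμ0 : 0 < μ := by rw [hμ]; positivity
  have hN0 : (N : ℝ) ≠ 0 := by positivity
  have hNpos : (0 : ℝ) < N := by positivity
  by_cases hc : 0 ≤ 1 - μ
  · have hrec := unroll_recursion
      (fun s => ((N : ℝ) ^ (t + 1))⁻¹ * ∑ ξ : Fin (t + 1) → Fin N, wnormSq (gram d N q)
        (Qw (R.mulVec (stePath q y Qw R η w0 (extendPath ξ) s)) - wstar))
      (fun k => ((N : ℝ) ^ (t + 1))⁻¹ * ∑ ξ : Fin (t + 1) → Fin N,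
        (wnormSq (gram d N q)
            (qerr Qw (R.mulVec (stePath q y Qw R η w0 (extendPath ξ) (k + 1))))
          + wnormSq (gram d N q)
              (qerr Qw (R.mulVec (stePath q y Qw R η w0 (extendPath ξ) k)))))
      (1 - μ) (3 + 2 / μ) hc t ?_
    · refine hrec.trans (le_of_eq ?_)
      congr 2
      simp only [stePath, Finset.sum_const, Finset.card_univ, Fintype.card_fun, Fintype.card_fin,
        nsmul_eq_mul, Nat.cast_pow]
      rw [inv_mul_cancel_left₀ (pow_ne_zero _ hN0)]
    · intro s hs
      have hs' : s < t + 1 := by omega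
      -- the path `ξ` enters the slack of step `s` only through `w^s(ξ)`, hence not through `ξ s`
      have hres := sum_resample (⟨s, hs'⟩ : Fin (t + 1))
        (fun (ξ : Fin (t + 1) → Fin N) (j : Fin N) =>
          wnormSq (gram d N q) (Qw (R.mulVec (steUpdate q y Qw R η
              (stePath q y Qw R η w0 (extendPath ξ) s) j)) - wstar)
          - (1 - μ) * wnormSq (gram d N q)
              (Qw (R.mulVec (stePath q y Qw R η w0 (extendPath ξ) s)) - wstar)
          - (3 + 2 / μ) * (wnormSq (gram d N q) (qerr Qw (R.mulVec (steUpdate q y Qw R η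
                (stePath q y Qw R η w0 (extendPath ξ) s) j)))
              + wnormSq (gram d N q)
                  (qerr Qw (R.mulVec (stePath q y Qw R η w0 (extendPath ξ) s))))) ?_
      · have hle := Finset.sum_nonpos fun (ξ : Fin (t + 1) → Fin N) (_ : ξ ∈ Finset.univ) =>
          one_step hN q y wstar hinterp Qw R hR1 lam ρ hlam hρ hG2 hqG η μ hη hμ
            (stePath q y Qw R η w0 (extendPath ξ) s)
        rw [← hres, Fintype.card_fin] at hle
        have hle' := nonpos_of_mul_nonpos_right hle hNpos
        have hstep : ∀ ξ : Fin (t + 1) → Fin N,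
            steUpdate q y Qw R η (stePath q y Qw R η w0 (extendPath ξ) s) (ξ ⟨s, hs'⟩)
              = stePath q y Qw R η w0 (extendPath ξ) (s + 1) := by
          intro ξ
          simp [stePath, extendPath, hs']
        simp only [hstep] at hle'
        rw [Finset.sum_sub_distrib, Finset.sum_sub_distrib, ← Finset.mul_sum,
          ← Finset.mul_sum] at hle'
        have hinv : (0 : ℝ) ≤ ((N : ℝ) ^ (t + 1))⁻¹ := by positivity
        have := mul_nonpos_of_nonneg_of_nonpos hinv hle'
        linarith
      · intro ξ a
        have hpath : stePath q y Qw R η w0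
              (extendPath (Function.update ξ (⟨s, hs'⟩ : Fin (t + 1)) a)) s
            = stePath q y Qw R η w0 (extendPath ξ) s := by
          refine stePath_congr q y Qw R η w0 _ _ s fun r hr => ?_
          have hr' : r < t + 1 := by omega
          have hne : (⟨r, hr'⟩ : Fin (t + 1)) ≠ ⟨s, hs'⟩ := by
            simp only [ne_eq, Fin.mk.injEq]
            omega
          simp only [extendPath, hr', dif_pos]
          exact Function.update_of_ne hne _ _
        simp only [hpath]
  · -- here `μ > 1`, which forces the seminorm to vanish identically
    have hzero : ∀ z, wnormSq (gram d N q) z = 0 := by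
      intro z
      have h1 := sum_wnormSq_sgd_le hN q lam ρ hlam hρ hG2 hqG η μ hη hμ z
      have h2 := (Finset.sum_nonneg fun j (_ : j ∈ Finset.univ) =>
        wnormSq_gram_nonneg q (z - (η * (q j ⬝ᵥ z)) • q j)).trans h1
      have h3 := nonneg_of_mul_nonneg_right h2 hNpos
      have h4 := wnormSq_gram_nonneg q z
      nlinarith
    simp [hzero]
end
end

section
/- One-step contraction inequality for the rotated STE update. For every step size η with 0 < η ≤ λ/(6ρ) and every current weight v : Fin d → ℝ: (1/N) · ∑_{j} ‖Q_w(R.mulVec (v⁺(j))) − w⋆‖_G² ≤ (1 − ηλ/2) · ‖Q_w(R.mulVec v) − w⋆‖_G² + (3 + 2/(ηλ)) · ( (1/N) · ∑_{j} ‖e(R.mulVec (v⁺(j)))‖_G² + ‖e(R.mulVec v)‖_G² ). -/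
/-!
Write `u = Q_w(Rv) - w⋆`, `e₀ = e(Rv)` and `e_j = e(R v⁺(j))`. Since `R Rᵀ = 1` and the targets are
interpolated, `Q_w(R v⁺(j)) - w⋆ = (u - η (q_j ⬝ u) q_j) + (e_j - e₀)`: an exact SGD step on `u` plus
a quantization perturbation. On average over `j`, the exact step contracts
`‖·‖_G²` (`mean_wnormSq_step_le`): its cross term is `-2η ‖Gu‖² ≤ -2ηλ ‖u‖_G²` and its quadratic
term is at most `η²ρ ‖u‖_G² ≤ (ηλ/6) ‖u‖_G²`. Young's inequality for the seminorm `‖·‖_G` with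
parameter `ηλ` (`wnormSq_add_sub_le`) then absorbs the perturbation.
-/

open Matrix Finset

noncomputable section

lemma gram_transpose {d N : ℕ} (q : Fin N → Fin d → ℝ) : (gram d N q)ᵀ = gram d N q := by
  simp [_root_.gram, Matrix.transpose_sum, Matrix.transpose_vecMulVec]

lemma gram_mulVec {d N : ℕ} (q : Fin N → Fin d → ℝ) (u : Fin d → ℝ) :
    (gram d N q).mulVec u = (N : ℝ)⁻¹ • ∑ j, (q j ⬝ᵥ u) • q j := by
  simp only [_root_.gram, Matrix.smul_mulVec, Matrix.sum_mulVec, Matrix.vecMulVec_mulVec]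
  simp

lemma dotProduct_gram_comm {d N : ℕ} (q : Fin N → Fin d → ℝ) (a b : Fin d → ℝ) :
    a ⬝ᵥ (gram d N q).mulVec b = b ⬝ᵥ (gram d N q).mulVec a := by
  rw [Matrix.dotProduct_mulVec, ← Matrix.mulVec_transpose, gram_transpose, dotProduct_comm]

/-- Young's inequality with parameter `t`, followed by `(e - e₀)² ≤ 2e² + 2e₀²`; the constant
`2 + 2 / t` is relaxed to `3 + 2 / t`. -/
lemma wnormSq_add_sub_le {d N : ℕ} (q : Fin N → Fin d → ℝ) (a e e₀ : Fin d → ℝ) {t : ℝ}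
    (ht : 0 < t) :
    wnormSq (gram d N q) (a + (e - e₀)) ≤ (1 + t) * wnormSq (gram d N q) a
      + (3 + 2 / t) * (wnormSq (gram d N q) e + wnormSq (gram d N q) e₀) := by
  have key : ∀ x y z : ℝ,
      (x + (y - z)) ^ 2 ≤ (1 + t) * x ^ 2 + (3 + 2 / t) * (y ^ 2 + z ^ 2) := by
    intro x y z
    have h : (1 + t) * x ^ 2 + (3 + 2 / t) * (y ^ 2 + z ^ 2) - (x + (y - z)) ^ 2
        = (t * x - (y - z)) ^ 2 / t + (1 + 1 / t) * (y + z) ^ 2 + (y ^ 2 + z ^ 2) := by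
      field_simp
      ring
    have : 0 ≤ (t * x - (y - z)) ^ 2 / t + (1 + 1 / t) * (y + z) ^ 2 + (y ^ 2 + z ^ 2) := by
      positivity
    linarith
  simp only [wnormSq_gram]
  calc (N : ℝ)⁻¹ * ∑ i, (q i ⬝ᵥ (a + (e - e₀))) ^ 2
      ≤ (N : ℝ)⁻¹ * ∑ i, ((1 + t) * (q i ⬝ᵥ a) ^ 2
          + (3 + 2 / t) * ((q i ⬝ᵥ e) ^ 2 + (q i ⬝ᵥ e₀) ^ 2)) := by
        gcongr with i
        rw [dotProduct_add, dotProduct_sub]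
        exact key _ _ _
    _ = _ := by
        rw [Finset.sum_add_distrib, ← Finset.mul_sum, ← Finset.mul_sum, Finset.sum_add_distrib]
        ring

/-- Average effect on `‖·‖_G²` of the exact stochastic gradient step `u ↦ u - η (q_j ⬝ u) q_j`; the
factor is below `1` once `ηρ < 2λ`. -/
lemma mean_wnormSq_step_le {d N : ℕ} (hN : 1 ≤ N) (q : Fin N → Fin d → ℝ) {lam ρ η : ℝ}
    (hη : 0 ≤ η)
    (hG2 : (gram d N q * gram d N q - lam • gram d N q).PosSemidef)
    (hqG : ∀ i, q i ⬝ᵥ (gram d N q).mulVec (q i) ≤ ρ) (u : Fin d → ℝ) :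
    (N : ℝ)⁻¹ * ∑ j, wnormSq (gram d N q) (u - (η * (q j ⬝ᵥ u)) • q j)
      ≤ (1 - 2 * (η * lam) + η ^ 2 * ρ) * wnormSq (gram d N q) u := by
  have hN0 : (N : ℝ) ≠ 0 := by
    have : N ≠ 0 := by omega
    exact_mod_cast this
  have hcross : lam * wnormSq (gram d N q) u
      ≤ (N : ℝ)⁻¹ * ∑ j, (q j ⬝ᵥ u) * (q j ⬝ᵥ (gram d N q).mulVec u) := by
    have h := hG2.dotProduct_mulVec_nonneg u
    simp only [star_trivial, Matrix.sub_mulVec, ← Matrix.mulVec_mulVec, Matrix.smul_mulVec,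
      dotProduct_sub, dotProduct_smul, smul_eq_mul] at h
    rw [dotProduct_gram_comm] at h
    have h2 : (gram d N q).mulVec u ⬝ᵥ (gram d N q).mulVec u
        = (N : ℝ)⁻¹ * ∑ j, (q j ⬝ᵥ u) * (q j ⬝ᵥ (gram d N q).mulVec u) := by
      conv_lhs => arg 1; rw [gram_mulVec]
      simp [smul_dotProduct, sum_dotProduct]
    rw [← h2]
    simp only [wnormSq]
    linarith
  have hterm : ∀ j, wnormSq (gram d N q) (u - (η * (q j ⬝ᵥ u)) • q j)
      ≤ wnormSq (gram d N q) u
        - 2 * η * ((q j ⬝ᵥ u) * (q j ⬝ᵥ (gram d N q).mulVec u))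
        + η ^ 2 * ρ * (q j ⬝ᵥ u) ^ 2 := by
    intro j
    have h := mul_le_mul_of_nonneg_left (hqG j) (sq_nonneg (η * (q j ⬝ᵥ u)))
    simp only [wnormSq, Matrix.mulVec_sub, Matrix.mulVec_smul, dotProduct_sub, sub_dotProduct,
      smul_dotProduct, dotProduct_smul, smul_eq_mul]
    rw [dotProduct_gram_comm q u (q j)]
    nlinarith [h]
  have hsum := mul_le_mul_of_nonneg_left
    (Finset.sum_le_sum fun j (_ : j ∈ Finset.univ) => hterm j)
    (inv_nonneg.2 (Nat.cast_nonneg (α := ℝ) N))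
  rw [Finset.sum_add_distrib, Finset.sum_sub_distrib, ← Finset.mul_sum, ← Finset.mul_sum,
    Finset.sum_const, Finset.card_univ, Fintype.card_fin, nsmul_eq_mul, mul_add, mul_sub,
    inv_mul_cancel_left₀ hN0] at hsum
  have hsq := wnormSq_gram q u
  have hc := mul_le_mul_of_nonneg_left hcross hη
  have hr : (N : ℝ)⁻¹ * (η ^ 2 * ρ * ∑ j, (q j ⬝ᵥ u) ^ 2)
      = η ^ 2 * ρ * wnormSq (gram d N q) u := by
    rw [hsq]; ring
  rw [hr] at hsum
  linarith

/-- The rotation cancels: in rotated coordinates the update is an exact step plus quantization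
errors. -/
lemma quant_steUpdate_sub {d N : ℕ} (q : Fin N → Fin d → ℝ) (y : Fin N → ℝ) (wstar : Fin d → ℝ)
    (hinterp : ∀ i, y i = q i ⬝ᵥ wstar) (Qw : (Fin d → ℝ) → Fin d → ℝ)
    (R : Matrix (Fin d) (Fin d) ℝ) (hR : R * Rᵀ = 1) (η : ℝ) (v : Fin d → ℝ) (j : Fin N) :
    Qw (R.mulVec (steUpdate q y Qw R η v j)) - wstar
      = ((Qw (R.mulVec v) - wstar)
          - (η * (q j ⬝ᵥ (Qw (R.mulVec v) - wstar))) • q j)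
        + (qerr Qw (R.mulVec (steUpdate q y Qw R η v j)) - qerr Qw (R.mulVec v)) := by
  have h : R.mulVec (steUpdate q y Qw R η v j)
      = R.mulVec v - (η * (q j ⬝ᵥ (Qw (R.mulVec v) - wstar))) • q j := by
    rw [steUpdate, Matrix.mulVec_sub, Matrix.mulVec_smul, Matrix.mulVec_mulVec, hR,
      Matrix.one_mulVec, hinterp, dotProduct_sub]
  simp only [qerr]
  generalize hw : Qw (R.mulVec (steUpdate q y Qw R η v j)) = w
  rw [h]
  abel

/-- One-step contraction inequality for the rotated STE update. -/
theorem roste_one_step_contraction (d N : ℕ) (hd : 1 ≤ d) (hN : 1 ≤ N)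
    (q : Fin N → Fin d → ℝ) (y : Fin N → ℝ)
    (wstar : Fin d → ℝ) (hinterp : ∀ i, y i = q i ⬝ᵥ wstar)
    (Qw : (Fin d → ℝ) → Fin d → ℝ)
    (R : Matrix (Fin d) (Fin d) ℝ) (hR1 : R * Rᵀ = 1) (hR2 : Rᵀ * R = 1)
    (lam ρ : ℝ) (hlam : 0 < lam) (hρ : 0 < ρ)
    (hG2 : (gram d N q * gram d N q - lam • gram d N q).PosSemidef)
    (hqG : ∀ i, q i ⬝ᵥ (gram d N q).mulVec (q i) ≤ ρ)
    (η : ℝ) (hη0 : 0 < η) (hη : η ≤ lam / (6 * ρ))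
    (v : Fin d → ℝ) :
    (1 / (N : ℝ)) *
        ∑ j, wnormSq (gram d N q) (Qw (R.mulVec (steUpdate q y Qw R η v j)) - wstar)
      ≤ (1 - η * lam / 2) * wnormSq (gram d N q) (Qw (R.mulVec v) - wstar)
        + (3 + 2 / (η * lam)) *
            ((1 / (N : ℝ)) *
                ∑ j, wnormSq (gram d N q) (qerr Qw (R.mulVec (steUpdate q y Qw R η v j)))
              + wnormSq (gram d N q) (qerr Qw (R.mulVec v))) := by
  have hx : 0 < η * lam := mul_pos hη0 hlam
  set G := gram d N q with hG
  set u := Qw (R.mulVec v) - wstar with hu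
  have hNpos : (0 : ℝ) < N := by exact_mod_cast hN
  have hNc : (N : ℝ)⁻¹ * N = 1 := inv_mul_cancel₀ hNpos.ne'
  have hU : 0 ≤ wnormSq G u := by
    rw [hG, wnormSq_gram]
    positivity
  have hρη : η ^ 2 * ρ ≤ η * lam / 6 := by
    rw [le_div_iff₀ (by positivity)] at hη
    nlinarith
  have hstep := mean_wnormSq_step_le hN q hη0.le hG2 hqG u
  have hyoung : ∀ j, wnormSq G (Qw (R.mulVec (steUpdate q y Qw R η v j)) - wstar)
      ≤ (1 + η * lam) * wnormSq G (u - (η * (q j ⬝ᵥ u)) • q j)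
        + (3 + 2 / (η * lam)) * (wnormSq G (qerr Qw (R.mulVec (steUpdate q y Qw R η v j)))
          + wnormSq G (qerr Qw (R.mulVec v))) := fun j => by
    rw [quant_steUpdate_sub q y wstar hinterp Qw R hR1 η v j]
    exact wnormSq_add_sub_le q _ _ _ hx
  have hsum := mul_le_mul_of_nonneg_left
    (Finset.sum_le_sum fun j (_ : j ∈ Finset.univ) => hyoung j) (inv_nonneg.2 hNpos.le)
  rw [Finset.sum_add_distrib, ← Finset.mul_sum, ← Finset.mul_sum, Finset.sum_add_distrib,
    Finset.sum_const, Finset.card_univ, Fintype.card_fin, nsmul_eq_mul] at hsum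
  -- With `x = ηλ`, the total factor is `(1 + x) (1 - 11x/6) ≤ 1 - x/2`.
  have hcontr : (1 + η * lam) *
      ((N : ℝ)⁻¹ * ∑ j, wnormSq G (u - (η * (q j ⬝ᵥ u)) • q j))
      ≤ (1 - η * lam / 2) * wnormSq G u := by
    refine (mul_le_mul_of_nonneg_left hstep (by positivity)).trans ?_
    rw [← mul_assoc]
    refine mul_le_mul_of_nonneg_right ?_ hU
    nlinarith [mul_le_mul_of_nonneg_left hρη (by positivity : 0 ≤ 1 + η * lam)]
  rw [one_div]
  calc _ ≤ _ := hsum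
    _ = (1 + η * lam) * ((N : ℝ)⁻¹ * ∑ j, wnormSq G (u - (η * (q j ⬝ᵥ u)) • q j))
        + (3 + 2 / (η * lam)) *
          ((N : ℝ)⁻¹ * ∑ j, wnormSq G (qerr Qw (R.mulVec (steUpdate q y Qw R η v j)))
            + ((N : ℝ)⁻¹ * N) * wnormSq G (qerr Qw (R.mulVec v))) := by ring
    _ ≤ _ := by
        rw [hNc, one_mul]
        gcongr
end
end

section
/- Two-sided Hoeffding tail bound for Rademacher sums (used to prove the incoherence property of random Hadamard rotation): let a : Fin d → ℝ with ∑_i (a i)² > 0 and let t > 0. Then the number of sign patterns ε : Fin d → Bool such that |∑_i σ(ε) i · a i| ≥ t is at most 2 · 2^d · exp(−t² / (2 · ∑_i (a i)²)). -/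
/-!
The proof is the Chernoff method. For every real `l`, the exponential moment of the Rademacher sum
factors over the coordinates (`sum_exp_signVec`):
`∑ ε, exp (l * ∑ i, σ(ε) i * a i) = ∏ i, 2 * cosh (l * a i)`, and `cosh x ≤ exp (x ^ 2 / 2)` bounds
it by `2 ^ d * exp (l ^ 2 * V / 2)` with `V = ∑ i, a i ^ 2`. A pattern with `t ≤ |S|` satisfies
`1 ≤ exp (-l * t) * (exp (l * S) + exp (-l * S))` for `l ≥ 0`; summing over all patterns and
choosing the optimal `l = t / V` gives the two-sided bound.
-/

open Finset

/-- The sign vector associated with a Boolean pattern. -/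
def signVec {d : ℕ} (ε : Fin d → Bool) : Fin d → ℝ :=
  fun i => if ε i then (1 : ℝ) else -1

lemma sum_exp_signVec (d : ℕ) (a : Fin d → ℝ) (l : ℝ) :
    ∑ ε : Fin d → Bool, Real.exp (l * ∑ i, signVec ε i * a i)
      = ∏ i, (2 * Real.cosh (l * a i)) := by
  have h : ∀ i, 2 * Real.cosh (l * a i)
      = ∑ b : Bool, Real.exp (l * ((if b then (1 : ℝ) else -1) * a i)) := by
    intro i
    rw [Real.cosh_eq]
    simp
    ring
  simp_rw [h, prod_univ_sum, Fintype.piFinset_univ, mul_sum, Real.exp_sum]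
  rfl

lemma sum_exp_signVec_le (d : ℕ) (a : Fin d → ℝ) (l : ℝ) :
    ∑ ε : Fin d → Bool, Real.exp (l * ∑ i, signVec ε i * a i)
      ≤ 2 ^ d * Real.exp (l ^ 2 * (∑ i, (a i) ^ 2) / 2) := by
  rw [sum_exp_signVec, prod_mul_distrib, prod_const, card_univ, Fintype.card_fin]
  gcongr
  calc ∏ i, Real.cosh (l * a i) ≤ ∏ i, Real.exp ((l * a i) ^ 2 / 2) :=
        prod_le_prod (fun i _ => (Real.cosh_pos _).le) fun i _ => Real.cosh_le_exp_half_sq _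
    _ = Real.exp (l ^ 2 * (∑ i, (a i) ^ 2) / 2) := by
        rw [← Real.exp_sum, mul_sum, sum_div]
        simp_rw [mul_pow]

/-- Two-sided Hoeffding tail bound for Rademacher sums: the number of sign patterns
`ε ∈ {−1,1}^d` with `|∑ i, σ(ε) i * a i| ≥ t` is at most
`2 · 2^d · exp(−t²/(2 ∑ i (a i)²))`. -/
theorem hoeffding_rademacher_count (d : ℕ) (a : Fin d → ℝ)
    (ha : 0 < ∑ i, (a i) ^ 2) (t : ℝ) (ht : 0 < t) :
    ((Finset.univ.filter fun ε : Fin d → Bool =>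
        t ≤ |∑ i, signVec ε i * a i|).card : ℝ)
      ≤ 2 * 2 ^ d * Real.exp (-t ^ 2 / (2 * ∑ i, (a i) ^ 2)) := by
  have h1 := sum_exp_signVec_le d a (t / ∑ i, (a i) ^ 2)
  have h2 := sum_exp_signVec_le d a (-(t / ∑ i, (a i) ^ 2))
  rw [neg_sq] at h2
  set V := ∑ i, (a i) ^ 2
  set l := t / V with hl
  have hl0 : 0 < l := div_pos ht ha
  have key : ((Finset.univ.filter fun ε : Fin d → Bool =>
        t ≤ |∑ i, signVec ε i * a i|).card : ℝ)
      ≤ ∑ ε : Fin d → Bool, Real.exp (-(l * t)) * (Real.exp (l * ∑ i, signVec ε i * a i)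
          + Real.exp (-l * ∑ i, signVec ε i * a i)) := by
    rw [card_filter]
    push_cast
    refine sum_le_sum fun ε _ => ?_
    split_ifs with h
    · rw [mul_add, ← Real.exp_add, ← Real.exp_add]
      rcases le_abs.1 h with h | h
      · have := Real.one_le_exp (x := -(l * t) + l * ∑ i, signVec ε i * a i) (by nlinarith)
        linarith [Real.exp_pos (-(l * t) + -l * ∑ i, signVec ε i * a i)]
      · have := Real.one_le_exp (x := -(l * t) + -l * ∑ i, signVec ε i * a i) (by nlinarith)
        linarith [Real.exp_pos (-(l * t) + l * ∑ i, signVec ε i * a i)]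
    · positivity
  rw [← mul_sum, sum_add_distrib] at key
  calc _ ≤ _ := key
    _ ≤ Real.exp (-(l * t)) * (2 ^ d * Real.exp (l ^ 2 * V / 2)
          + 2 ^ d * Real.exp (l ^ 2 * V / 2)) := by gcongr
    _ = 2 * 2 ^ d * (Real.exp (-(l * t)) * Real.exp (l ^ 2 * V / 2)) := by ring
    _ = _ := by
        rw [← Real.exp_add]
        congr 2
        rw [hl]
        field_simp
        ring
end
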